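/- arXiv:1708.04579 — 2 statements merged into one kernel-verified Lean document; each statement's English description precedes it below -/
import Mathlib

section
/- Every L♮-convex function f : ℤⁿ → ℝ ∪ {+∞} is globally discrete midpoint convex; that is, if f(x) + f(y) ≥ f((x − μ1) ∨ y) + f(x ∧ (y + μ1)) for all x, y ∈ ℤⁿ and all nonnegative integers μ (where 1 = (1,…,1) and ∨, ∧ denote componentwise max and min), then f(x) + f(y) ≥ f(⌈(x+y)/2⌉) + f(⌊(x+y)/2⌋) for all x, y ∈ ℤⁿ with ‖x − y‖∞ ≥ 2. -/
/-- The ℓ∞-norm of an integer vector, as a natural number. -/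
def linf {n : ℕ} (z : Fin n → ℤ) : ℕ :=
  Finset.univ.sup fun i => (z i).natAbs

/-- Componentwise round-up of (x+y)/2. -/
def avgUp {n : ℕ} (x y : Fin n → ℤ) : Fin n → ℤ :=
  fun i => ⌈((x i + y i : ℚ)) / 2⌉

/-- Componentwise round-down of (x+y)/2. -/
def avgDown {n : ℕ} (x y : Fin n → ℤ) : Fin n → ℤ :=
  fun i => ⌊((x i + y i : ℚ)) / 2⌋

/-- A set `S ⊆ ℤⁿ` is discrete midpoint convex. -/
def DMCSet {n : ℕ} (S : Set (Fin n → ℤ)) : Prop :=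
  ∀ ⦃x⦄, x ∈ S → ∀ ⦃y⦄, y ∈ S → 2 ≤ linf (x - y) →
    avgUp x y ∈ S ∧ avgDown x y ∈ S

/-- `f` satisfies discrete midpoint convexity for the pair `(x, y)`.
Values are in `ℝ ∪ {+∞}`, modeled as `WithTop ℝ`. -/
def DMCPair {n : ℕ} (f : (Fin n → ℤ) → WithTop ℝ) (x y : Fin n → ℤ) : Prop :=
  f (avgUp x y) + f (avgDown x y) ≤ f x + f y

/-- `f` is globally discrete midpoint convex. -/
def GloballyDMC {n : ℕ} (f : (Fin n → ℤ) → WithTop ℝ) : Prop :=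
  ∀ x y : Fin n → ℤ, 2 ≤ linf (x - y) → DMCPair f x y

/-- The effective domain of `f`. -/
def effDom {n : ℕ} (f : (Fin n → ℤ) → WithTop ℝ) : Set (Fin n → ℤ) :=
  {x | f x ≠ ⊤}

/-- `f` is locally discrete midpoint convex. -/
def LocallyDMC {n : ℕ} (f : (Fin n → ℤ) → WithTop ℝ) : Prop :=
  DMCSet (effDom f) ∧ ∀ x y : Fin n → ℤ, linf (x - y) = 2 → DMCPair f x y

theorem avgUp_apply {n : ℕ} (x y : Fin n → ℤ) (i : Fin n) :
    avgUp x y i = (x i + y i + 1) / 2 := by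
  rw [avgUp, Int.ceil_eq_iff]
  obtain ⟨k, hk | hk⟩ := Int.even_or_odd' (x i + y i)
  · have hq : (x i + y i : ℚ) = 2 * k := by exact_mod_cast hk
    rw [show (x i + y i + 1) / 2 = k by omega, hq]
    constructor <;> linarith
  · have hq : (x i + y i : ℚ) = 2 * k + 1 := by exact_mod_cast hk
    rw [show (x i + y i + 1) / 2 = k + 1 by omega, hq]
    push_cast
    constructor <;> linarith

theorem avgDown_apply {n : ℕ} (x y : Fin n → ℤ) (i : Fin n) :
    avgDown x y i = (x i + y i) / 2 := by
  have h := Rat.floor_intCast_div_natCast (x i + y i) 2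
  push_cast at h
  exact h

/-- One step replaces `(x, y)` by its join and meet (`μ = 0`) and then moves these one unit
towards each other (`μ = 1`). Sums are preserved and distances of at least `2` drop by `2`. -/
theorem DMCPair.of_translation_submodular {n : ℕ} {f : (Fin n → ℤ) → WithTop ℝ}
    (hL : ∀ (x y : Fin n → ℤ) (μ : ℕ),
      f ((x - (μ : ℤ) • 1) ⊔ y) + f (x ⊓ (y + (μ : ℤ) • 1)) ≤ f x + f y)
    (N : ℕ) (x y : Fin n → ℤ) (hN : ∀ i, |x i - y i| ≤ N + 1) : DMCPair f x y := by
  have hjm : f (x ⊔ y) + f (x ⊓ y) ≤ f x + f y := by simpa using hL x y 0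
  induction N generalizing x y with
  | zero =>
    have hup : avgUp x y = x ⊔ y := by
      funext i
      have := abs_le.mp (hN i)
      rw [avgUp_apply, Pi.sup_apply]
      omega
    have hdown : avgDown x y = x ⊓ y := by
      funext i
      have := abs_le.mp (hN i)
      rw [avgDown_apply, Pi.inf_apply]
      omega
    rw [DMCPair, hup, hdown]
    exact hjm
  | succ N ih =>
    have hstep := hL (x ⊔ y) (x ⊓ y) 1
    set p : Fin n → ℤ := (x ⊔ y - ((1 : ℕ) : ℤ) • 1) ⊔ (x ⊓ y) with hp
    set q : Fin n → ℤ := (x ⊔ y) ⊓ (x ⊓ y + ((1 : ℕ) : ℤ) • 1) with hq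
    have hpi : ∀ i, p i = max (max (x i) (y i) - 1) (min (x i) (y i)) := by
      intro i; simp [hp]
    have hqi : ∀ i, q i = min (max (x i) (y i)) (min (x i) (y i) + 1) := by
      intro i; simp [hq]
    have hsum : ∀ i, p i + q i = x i + y i := by
      intro i
      rw [hpi, hqi]
      omega
    have hpq : DMCPair f p q := by
      refine ih p q (fun i => ?_) (by simpa using hL p q 0)
      have := abs_le.mp (hN i)
      push_cast at this
      rw [hpi, hqi, abs_le]
      omega
    have hup : avgUp p q = avgUp x y := by
      funext i; rw [avgUp_apply, avgUp_apply, hsum]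
    have hdown : avgDown p q = avgDown x y := by
      funext i; rw [avgDown_apply, avgDown_apply, hsum]
    rw [DMCPair, hup, hdown] at hpq
    exact hpq.trans (hstep.trans hjm)

/-- Every L♮-convex function (defined via translation-submodularity) is
globally discrete midpoint convex. -/
theorem lnatConvex_globallyDMC {n : ℕ} (f : (Fin n → ℤ) → WithTop ℝ)
    (hL : ∀ (x y : Fin n → ℤ) (μ : ℕ),
      f ((x - (μ : ℤ) • 1) ⊔ y) + f (x ⊓ (y + (μ : ℤ) • 1)) ≤ f x + f y) :
    GloballyDMC f := by
  intro x y _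
  refine DMCPair.of_translation_submodular hL (linf (x - y)) x y fun i => ?_
  have h : (x i - y i).natAbs ≤ linf (x - y) :=
    Finset.le_sup (f := fun i => ((x - y) i).natAbs) (Finset.mem_univ i)
  rw [Int.abs_eq_natAbs]
  omega
end

section
/- Let f : ℤⁿ → ℝ ∪ {+∞} be a locally discrete midpoint convex function. Then discrete midpoint convexity f(x) + f(y) ≥ f(⌈(x+y)/2⌉) + f(⌊(x+y)/2⌋) holds for all x, y ∈ ℤⁿ for which ‖x − y‖∞ is even. -/
/-- The entries of a list at positions `1, 3, 5, …`. -/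
def oddPos {α : Type*} : List α → List α
  | [] => []
  | [b] => [b]
  | b :: _ :: r => b :: oddPos r

/-- The entries of a list at positions `2, 4, 6, …`. -/
def evenPos {α : Type*} : List α → List α
  | [] => []
  | [_] => []
  | _ :: c :: r => c :: evenPos r

/-- The positive parts of the entries in odd position, each followed by minus the negative part
of the next entry. -/
def mixPos {n : ℕ} : List (Fin n → ℤ) → List (Fin n → ℤ)
  | [] => []
  | [b] => [fun i => max (b i) 0]
  | b :: c :: r => (fun i => max (b i) 0 + min (c i) 0) :: mixPos r

/-- A list of `{-1, 0, 1}`-vectors that is ascending, in which two entries differ by at most one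
in each component, and whose entries all have component `1` at `i₀`. -/
structure UnitChain {n : ℕ} (i₀ : Fin n) (L : List (Fin n → ℤ)) : Prop where
  one : ∀ v ∈ L, v i₀ = 1
  bound : ∀ v ∈ L, ∀ i, -1 ≤ v i ∧ v i ≤ 1
  step : L.Pairwise fun u w => ∀ i, u i ≤ w i ∧ w i ≤ u i + 1

theorem oddPos_sublist {α : Type*} : ∀ L : List α, (oddPos L).Sublist L
  | [] => List.Sublist.refl _
  | [_] => List.Sublist.refl _
  | b :: c :: r => ((oddPos_sublist r).cons c).cons_cons b

theorem evenPos_sublist {α : Type*} : ∀ L : List α, (evenPos L).Sublist L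
  | [] => List.Sublist.refl _
  | [_] => List.nil_sublist _
  | b :: c :: r => ((evenPos_sublist r).cons_cons c).cons b

theorem oddPos_append_evenPos_perm {α : Type*} : ∀ L : List α, (oddPos L ++ evenPos L).Perm L
  | [] => List.Perm.refl _
  | [_] => List.Perm.refl _
  | b :: c :: r => by
    simp only [oddPos, evenPos, List.cons_append]
    exact (List.perm_middle.trans ((oddPos_append_evenPos_perm r).cons c)).cons b

theorem oddPos_sum_add_evenPos_sum {M : Type*} [AddCommMonoid M] (L : List M) :
    (oddPos L).sum + (evenPos L).sum = L.sum := by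
  rw [← List.sum_append, (oddPos_append_evenPos_perm L).sum_eq]

theorem length_oddPos {α : Type*} : ∀ L : List α, (oddPos L).length = (L.length + 1) / 2
  | [] => by simp [oddPos]
  | [_] => by simp [oddPos]
  | _ :: _ :: r => by simp only [oddPos, List.length_cons, length_oddPos r]; omega

theorem length_mixPos {n : ℕ} :
    ∀ L : List (Fin n → ℤ), (mixPos L).length = (L.length + 1) / 2
  | [] => by simp [mixPos]
  | [_] => by simp [mixPos]
  | _ :: _ :: r => by simp only [mixPos, List.length_cons, length_mixPos r]; omega

/-- The alternating sum of an ascending list lies between bounds given by those of the list. -/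
theorem alternating_sum_bounds {n : ℕ} (i : Fin n) (hi : ℤ) :
    ∀ (L : List (Fin n → ℤ)) (lo : ℤ), lo ≤ hi → (∀ v ∈ L, lo ≤ v i ∧ v i ≤ hi) →
      (L.Pairwise fun u w => u i ≤ w i) →
      (Even L.length → lo - hi ≤ (oddPos L).sum i - (evenPos L).sum i ∧
        (oddPos L).sum i - (evenPos L).sum i ≤ 0) ∧
      (Odd L.length → lo ≤ (oddPos L).sum i - (evenPos L).sum i ∧
        (oddPos L).sum i - (evenPos L).sum i ≤ hi)
  | [], lo, h, _, _ => by simp [oddPos, evenPos, h]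
  | [b], lo, h, hb, _ => by simpa [oddPos, evenPos] using hb
  | b :: c :: r, lo, h, hb, hp => by
    simp only [List.pairwise_cons, List.mem_cons, forall_eq_or_imp] at hp hb
    obtain ⟨⟨hbc, -⟩, hcr, hr⟩ := hp
    obtain ⟨hb, hc, hbr⟩ := hb
    have ih := alternating_sum_bounds i hi r (c i) hc.2
      (fun v hv => ⟨hcr v hv, (hbr v hv).2⟩) hr
    simp only [oddPos, evenPos, List.length_cons, List.sum_cons, Pi.add_apply,
      Nat.even_add_one, Nat.odd_add_one, Nat.not_even_iff_odd, Nat.not_odd_iff_even]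
    refine ⟨fun he => ?_, fun ho => ?_⟩
    · have := ih.1 he; omega
    · have := ih.2 ho; omega

theorem mixPos_sum_of_nonneg {n : ℕ} (i : Fin n) :
    ∀ L : List (Fin n → ℤ), (∀ v ∈ L, 0 ≤ v i) → (mixPos L).sum i = (oddPos L).sum i
  | [], _ => rfl
  | [b], h => by simpa [mixPos, oddPos] using h
  | b :: c :: r, h => by
    simp only [List.mem_cons, forall_eq_or_imp] at h
    have := mixPos_sum_of_nonneg i r h.2.2
    simp only [mixPos, oddPos, List.sum_cons, Pi.add_apply]
    omega

theorem mixPos_sum_of_nonpos {n : ℕ} (i : Fin n) :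
    ∀ L : List (Fin n → ℤ), (∀ v ∈ L, v i ≤ 0) → (mixPos L).sum i = (evenPos L).sum i
  | [], _ => rfl
  | [b], h => by simpa [mixPos, evenPos] using h
  | b :: c :: r, h => by
    simp only [List.mem_cons, forall_eq_or_imp] at h
    have := mixPos_sum_of_nonpos i r h.2.2
    simp only [mixPos, evenPos, List.sum_cons, Pi.add_apply]
    omega

theorem mixPos_bounds {n : ℕ} (i : Fin n) (lo hi : ℤ) (h : 0 ≤ hi) :
    ∀ L : List (Fin n → ℤ), (∀ v ∈ L, lo ≤ v i ∧ v i ≤ hi) →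
      ∀ v ∈ mixPos L, lo ≤ v i ∧ v i ≤ hi
  | [], hL => by simp [mixPos]
  | [b], hL => by
    simp only [List.mem_cons, forall_eq_or_imp] at hL
    simp only [mixPos, List.mem_singleton, forall_eq]
    omega
  | b :: c :: r, hL => by
    simp only [List.mem_cons, forall_eq_or_imp] at hL
    simp only [mixPos, List.mem_cons, forall_eq_or_imp]
    exact ⟨by omega, mixPos_bounds i lo hi h r hL.2.2⟩

namespace UnitChain

variable {n : ℕ} {i₀ : Fin n}

theorem sublist {L L' : List (Fin n → ℤ)} (h : UnitChain i₀ L) (hL : L'.Sublist L) :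
    UnitChain i₀ L' :=
  ⟨fun v hv => h.one v (hL.subset hv), fun v hv => h.bound v (hL.subset hv), h.step.sublist hL⟩

theorem sum_apply {L : List (Fin n → ℤ)} (h : UnitChain i₀ L) : L.sum i₀ = L.length := by
  induction L with
  | nil => rfl
  | cons b T ih =>
    have := ih (h.sublist (List.sublist_cons_self b T))
    have := h.one b List.mem_cons_self
    simp only [List.sum_cons, Pi.add_apply, List.length_cons]
    omega

theorem mixPos {L : List (Fin n → ℤ)} (h : UnitChain i₀ L) : UnitChain i₀ (mixPos L) := by
  refine ⟨fun v hv => ?_, fun v hv i => ?_, ?_⟩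
  · have := mixPos_bounds i₀ 1 1 (by norm_num) L (fun w hw => by simp [h.one w hw]) v hv
    omega
  · exact mixPos_bounds i (-1) 1 (by norm_num) L (fun w hw => h.bound w hw i) v hv
  · have key : ∀ L : List (Fin n → ℤ), UnitChain i₀ L →
        (_root_.mixPos L).Pairwise fun u w => ∀ i, u i ≤ w i ∧ w i ≤ u i + 1 := by
      intro L
      induction L using _root_.mixPos.induct with
      | case1 => intro _; simp [_root_.mixPos]
      | case2 b => intro _; simp [_root_.mixPos]
      | case3 b c r ih =>
        intro h
        have hr := ih (h.sublist ((List.sublist_cons_self c r).cons b))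
        obtain ⟨-, hbd, hp⟩ := h
        simp only [List.pairwise_cons, List.mem_cons, forall_eq_or_imp] at hp hbd
        simp only [_root_.mixPos, List.pairwise_cons]
        refine ⟨fun v hv i => ?_, hr⟩
        have h1 := hbd.1 i
        have h2 := hp.1.1 i
        have := mixPos_bounds i (c i) (b i + 1) (by omega) r
          (fun w hw => ⟨(hp.2.1 w hw i).1, (hp.1.2 w hw i).2⟩) v hv
        omega
    exact key L h

theorem even_bounds {L : List (Fin n → ℤ)} (h : UnitChain i₀ L) (he : Even L.length)
    (i : Fin n) : 0 ≤ (evenPos L).sum i - (oddPos L).sum i ∧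
      (evenPos L).sum i - (oddPos L).sum i ≤ 1 := by
  cases L with
  | nil => simp [evenPos, oddPos]
  | cons b T =>
    have hp := h.step
    have hb := (List.pairwise_cons.1 hp).1
    have := (alternating_sum_bounds i (b i + 1) (b :: T) (b i) (by omega) (by
      simp only [List.mem_cons, forall_eq_or_imp]
      exact ⟨by omega, fun v hv => hb v hv i⟩) (hp.imp fun h => (h i).1)).1 he
    omega

theorem odd_bounds {L : List (Fin n → ℤ)} (h : UnitChain i₀ L) (ho : Odd L.length)
    (i : Fin n) : 0 ≤ 2 * (_root_.mixPos L).sum i - L.sum i ∧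
      2 * (_root_.mixPos L).sum i - L.sum i ≤ 1 := by
  cases L with
  | nil => simp at ho
  | cons b T =>
    have hp := h.step
    have hb := (List.pairwise_cons.1 hp).1
    have hasc := hp.imp fun h => (h i).1
    have hsum := congrFun (oddPos_sum_add_evenPos_sum (b :: T)) i
    rw [Pi.add_apply] at hsum
    by_cases h0 : 0 ≤ b i
    · have hnn : ∀ v ∈ b :: T, 0 ≤ v i ∧ v i ≤ 1 := by
        intro v hv
        have h1 := h.bound v hv i
        rcases List.mem_cons.1 hv with rfl | hv
        · omega
        · have := hb v hv i; omega
      have := mixPos_sum_of_nonneg i (b :: T) fun v hv => (hnn v hv).1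
      have := (alternating_sum_bounds i 1 (b :: T) 0 (by omega) hnn hasc).2 ho
      omega
    · have hnp : ∀ v ∈ b :: T, -1 ≤ v i ∧ v i ≤ 0 := by
        intro v hv
        have h1 := h.bound v hv i
        rcases List.mem_cons.1 hv with rfl | hv
        · omega
        · have := hb v hv i; omega
      have := mixPos_sum_of_nonpos i (b :: T) fun v hv => (hnp v hv).2
      have := (alternating_sum_bounds i 0 (b :: T) (-1) (by omega) hnp hasc).2 ho
      omega

end UnitChain

theorem avgUp_eq {n : ℕ} {x y p : Fin n → ℤ}
    (h : ∀ i, 0 ≤ 2 * p i - (x i + y i) ∧ 2 * p i - (x i + y i) ≤ 1) : avgUp x y = p := by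
  funext i
  have h1 : (0 : ℚ) ≤ 2 * p i - (x i + y i) := by exact_mod_cast (h i).1
  have h2 : (2 * p i - (x i + y i) : ℚ) ≤ 1 := by exact_mod_cast (h i).2
  exact Int.ceil_eq_iff.2 ⟨by linarith, by linarith⟩

theorem avgDown_eq {n : ℕ} {x y q : Fin n → ℤ}
    (h : ∀ i, 0 ≤ (x i + y i) - 2 * q i ∧ (x i + y i) - 2 * q i ≤ 1) : avgDown x y = q := by
  funext i
  have h1 : (0 : ℚ) ≤ (x i + y i) - 2 * q i := by exact_mod_cast (h i).1
  have h2 : ((x i + y i) - 2 * q i : ℚ) ≤ 1 := by exact_mod_cast (h i).2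
  exact Int.floor_eq_iff.2 ⟨by linarith, by linarith⟩

theorem avgUp_comm {n : ℕ} (x y : Fin n → ℤ) : avgUp x y = avgUp y x := by
  funext i; simp only [avgUp, add_comm]

theorem avgDown_comm {n : ℕ} (x y : Fin n → ℤ) : avgDown x y = avgDown y x := by
  funext i; simp only [avgDown, add_comm]

theorem natAbs_le_linf {n : ℕ} (z : Fin n → ℤ) (i : Fin n) : (z i).natAbs ≤ linf z :=
  Finset.le_sup (f := fun i => (z i).natAbs) (Finset.mem_univ i)

theorem linf_sub_comm {n : ℕ} (x y : Fin n → ℤ) : linf (x - y) = linf (y - x) := by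
  unfold linf
  congr 1
  funext i
  simp only [Pi.sub_apply]
  omega

theorem UnitChain.avgUp_even {n : ℕ} {i₀ : Fin n} {L : List (Fin n → ℤ)} (h : UnitChain i₀ L)
    (he : Even L.length) (x : Fin n → ℤ) : avgUp x (x + L.sum) = x + (evenPos L).sum := by
  refine avgUp_eq fun i => ?_
  have := h.even_bounds he i
  have hsum := congrFun (oddPos_sum_add_evenPos_sum L) i
  simp only [Pi.add_apply] at hsum ⊢
  omega

theorem UnitChain.avgDown_even {n : ℕ} {i₀ : Fin n} {L : List (Fin n → ℤ)} (h : UnitChain i₀ L)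
    (he : Even L.length) (x : Fin n → ℤ) : avgDown x (x + L.sum) = x + (oddPos L).sum := by
  refine avgDown_eq fun i => ?_
  have := h.even_bounds he i
  have hsum := congrFun (oddPos_sum_add_evenPos_sum L) i
  simp only [Pi.add_apply] at hsum ⊢
  omega

theorem UnitChain.avgUp_odd {n : ℕ} {i₀ : Fin n} {L : List (Fin n → ℤ)} (h : UnitChain i₀ L)
    (ho : Odd L.length) (x : Fin n → ℤ) : avgUp x (x + L.sum) = x + (_root_.mixPos L).sum := by
  refine avgUp_eq fun i => ?_
  have := h.odd_bounds ho i
  simp only [Pi.add_apply]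
  omega

theorem UnitChain.two_le_linf {n : ℕ} {i₀ : Fin n} {L : List (Fin n → ℤ)} (h : UnitChain i₀ L)
    (hL : 2 ≤ L.length) (x : Fin n → ℤ) : 2 ≤ linf (x - (x + L.sum)) := by
  refine le_trans ?_ (natAbs_le_linf _ i₀)
  simp only [Pi.sub_apply, Pi.add_apply, h.sum_apply]
  omega

/-- A discrete midpoint convex set containing both ends of a unit chain contains all partial sums
of that chain. -/
theorem DMCSet.add_sum_mem {n : ℕ} {i₀ : Fin n} {S : Set (Fin n → ℤ)} (hS : DMCSet S)
    (L : List (Fin n → ℤ)) (hL : UnitChain i₀ L) (x : Fin n → ℤ) (hx : x ∈ S)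
    (hy : x + L.sum ∈ S) (L' : List (Fin n → ℤ)) (hL' : L'.Sublist L) : x + L'.sum ∈ S := by
  induction hm : L.length using Nat.strong_induction_on generalizing L x L' with
  | _ m ih =>
  subst hm
  have step : ∀ K K' : List (Fin n → ℤ), ∀ z, K.length < L.length → UnitChain i₀ K → z ∈ S →
      z + K.sum ∈ S → K'.Sublist K → z + K'.sum ∈ S :=
    fun K K' z hlt hK hz hzK hK' => ih _ hlt K hK z hz hzK K' hK' rfl
  have finish : ∀ b T, L = b :: T → x + b ∈ S → x + T.sum ∈ S → x + L'.sum ∈ S := by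
    rintro b T rfl hb hT
    have hTc := hL.sublist (List.sublist_cons_self b T)
    rcases List.sublist_cons_iff.1 hL' with hsub | ⟨K, rfl, hsub⟩
    · exact step T L' x (by simp) hTc hx hT hsub
    · have := step T K (x + b) (by simp) hTc hb (by simpa [add_assoc] using hy) hsub
      simpa [add_assoc] using this
  match L, hL with
  | [], _ => simpa [List.sublist_nil.1 hL'] using hx
  | [b], _ => exact finish b [] rfl (by simpa using hy) (by simpa using hx)
  | b :: c :: r, hL =>
    have h2 := hL.two_le_linf (by simp) x
    have hmid := hS hx hy h2
    rcases Nat.even_or_odd (b :: c :: r).length with he | ho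
    · rw [hL.avgUp_even he, hL.avgDown_even he] at hmid
      have hO := hL.sublist (oddPos_sublist _)
      have hlt : (oddPos (b :: c :: r)).length < (b :: c :: r).length := by
        rw [length_oddPos]; simp only [List.length_cons]; omega
      refine finish b (c :: r) rfl ?_ ?_
      · have := step _ [b] x hlt hO hx hmid.2 (by simp [oddPos])
        simpa using this
      · have hsum := oddPos_sum_add_evenPos_sum (b :: c :: r)
        have := step _ (oddPos r) _ hlt hO hmid.1
          (by rw [add_assoc, add_comm (evenPos _).sum, hsum]; exact hy) (by simp [oddPos])
        convert this using 1
        rw [List.sum_cons, ← oddPos_sum_add_evenPos_sum r, evenPos, List.sum_cons]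
        abel
    · rw [hL.avgUp_odd ho] at hmid
      match r, hL with
      | [], _ => exact absurd ho (by simp)
      | a :: r, hL =>
        set u : Fin n → ℤ := fun i => max (b i) 0 + min (c i) 0 with hu
        have hxu : x + u ∈ S := by
          have := step _ [u] x (by rw [length_mixPos]; simp only [List.length_cons]; omega)
            hL.mixPos hx hmid.1 (by simp [mixPos, hu])
          simpa using this
        set w : Fin n → ℤ := b + c - u with hw
        have hwc : UnitChain i₀ (w :: a :: r) := by
          obtain ⟨h1, h3, h4⟩ := hL
          rw [List.pairwise_cons, List.pairwise_cons] at h4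
          rw [List.forall_mem_cons, List.forall_mem_cons] at h1 h3
          have hwi : ∀ i, w i = b i ∨ w i = c i := by
            intro i
            have := h3.1 i
            have := h3.2.1 i
            have := h4.1 c List.mem_cons_self i
            simp only [hw, hu, Pi.sub_apply, Pi.add_apply]
            omega
          refine ⟨List.forall_mem_cons.2 ⟨?_, h1.2.2⟩, List.forall_mem_cons.2 ⟨fun i => ?_, h3.2.2⟩,
            List.pairwise_cons.2 ⟨fun v hv i => ?_, h4.2.2⟩⟩
          · rcases hwi i₀ with h | h <;> rw [h]
            exacts [h1.1, h1.2.1]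
          · rcases hwi i with h | h <;> rw [h]
            exacts [h3.1 i, h3.2.1 i]
          · rcases hwi i with h | h <;> rw [h]
            exacts [h4.1 v (List.mem_cons_of_mem _ hv) i, h4.2.1 v hv i]
        have hdrop : x + (b :: c :: r).sum ∈ S := by
          have := step (w :: a :: r) (w :: r) (x + u) (by simp) hwc hxu
            (by convert hy using 1; simp only [List.sum_cons, hw]; abel) (by simp)
          convert this using 1
          simp only [List.sum_cons, hw]
          abel
        have hbcr : UnitChain i₀ (b :: c :: r) := hL.sublist (by simp)
        have hb : x + b ∈ S := by
          simpa using step (b :: c :: r) [b] x (by simp) hbcr hx hdrop (by simp)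
        have hc : x + c ∈ S := by
          simpa using step (b :: c :: r) [c] x (by simp) hbcr hx hdrop (by simp)
        refine finish b (c :: a :: r) rfl hb ?_
        have := step (b :: a :: r) (a :: r) (x + c) (by simp) (hL.sublist (by simp)) hc
          (by convert hy using 1; simp only [List.sum_cons]; abel) (by simp)
        convert this using 1
        simp only [List.sum_cons]
        abel

theorem WithTop.add_le_add_of_middle {a b c d p q : WithTop ℝ} (hp : p ≠ ⊤) (hq : q ≠ ⊤)
    (h₁ : a + q ≤ p + d) (h₂ : p + b ≤ c + q) : a + b ≤ c + d := by
  have h : (a + b) + (p + q) ≤ (c + d) + (p + q) := by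
    calc (a + b) + (p + q) = (a + q) + (p + b) := by abel
      _ ≤ (p + d) + (c + q) := add_le_add h₁ h₂
      _ = (c + d) + (p + q) := by abel
  exact (WithTop.add_le_add_iff_right (WithTop.add_ne_top.2 ⟨hp, hq⟩)).1 h

theorem single_add_list_supermodular {M : Type*} [AddCommGroup M] (f : M → WithTop ℝ) (a : M) :
    ∀ (E : List M) (x : M),
      (∀ c ∈ E, ∀ z, f (z + a) + f (z + c) ≤ f z + f (z + a + c)) →
      (∀ q : List M, q.Sublist E → f (x + q.sum) ≠ ⊤ ∧ f (x + a + q.sum) ≠ ⊤) →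
      f (x + a) + f (x + E.sum) ≤ f x + f (x + a + E.sum)
  | [], x, _, _ => by simp [add_comm]
  | c :: E, x, hloc, hdom => by
    have ih := single_add_list_supermodular f a E (x + c)
      (fun c hc => hloc c (List.mem_cons_of_mem _ hc)) (fun q hq => by
        have := hdom (c :: q) (hq.cons_cons c)
        simpa [add_assoc, add_left_comm] using this)
    have h1 := hloc c List.mem_cons_self x
    have h2 := hdom [c] (by simp)
    simp only [List.sum_cons, List.sum_nil, add_zero] at h2 ⊢
    rw [add_right_comm x c a] at ih
    rw [← add_assoc, ← add_assoc, add_comm (f (x + a))]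
    exact WithTop.add_le_add_of_middle h2.1 h2.2 (by rwa [add_comm]) (by rwa [add_comm (f _)])

/-- Local supermodularity implies supermodularity along lists of increments. -/
theorem list_supermodular {M : Type*} [AddCommGroup M] (f : M → WithTop ℝ) (E : List M) :
    ∀ (O : List M) (x : M),
      (∀ a ∈ O, ∀ c ∈ E, ∀ z, f (z + a) + f (z + c) ≤ f z + f (z + a + c)) →
      (∀ p q : List M, p.Sublist O → q.Sublist E → f (x + p.sum + q.sum) ≠ ⊤) →
      f (x + O.sum) + f (x + E.sum) ≤ f x + f (x + O.sum + E.sum)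
  | [], x, _, _ => by simp
  | a :: O, x, hloc, hdom => by
    have ih := list_supermodular f E O (x + a)
      (fun b hb => hloc b (List.mem_cons_of_mem _ hb)) (fun p q hp hq => by
        have := hdom (a :: p) q (hp.cons_cons a) hq
        simpa [add_assoc] using this)
    have h1 := single_add_list_supermodular f a E x (hloc a List.mem_cons_self) fun q hq =>
      ⟨by simpa using hdom [] q (by simp) hq, by simpa using hdom [a] q (by simp) hq⟩
    have ha := hdom [a] [] (by simp) (by simp)
    have haE := hdom [a] E (by simp) (List.Sublist.refl _)
    simp only [List.sum_cons, List.sum_nil, add_zero] at ha haE ⊢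
    rw [← add_assoc]
    exact WithTop.add_le_add_of_middle ha haE ih h1

/-- A vector attaining its `ℓ∞`-norm `m` at a positive component is the sum of a unit chain of
length `m`. -/
theorem exists_unitChain_sum_eq {n : ℕ} (i₀ : Fin n) :
    ∀ (m : ℕ) (d : Fin n → ℤ), (∀ i, (d i).natAbs ≤ m) → d i₀ = m →
      ∃ L, UnitChain i₀ L ∧ L.length = m ∧ L.sum = d ∧
        ∀ v ∈ L, ∀ i, (0 ≤ d i → 0 ≤ v i) ∧ (d i ≤ 0 → v i ≤ 0) ∧ (d i = m → v i = 1)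
  | 0, d, h, _ => ⟨[], ⟨by simp, by simp, by simp⟩, rfl, by
      funext i; have := h i; simp only [List.sum_nil, Pi.zero_apply]; omega, by simp⟩
  | m + 1, d, h, h0 => by
    let b : Fin n → ℤ := fun i => if d i = m + 1 then 1 else if d i < 0 then -1 else 0
    have hb : ∀ i, b i = if d i = m + 1 then 1 else if d i < 0 then -1 else 0 := fun i => rfl
    obtain ⟨L, hL, hlen, hsum, hsign⟩ := exists_unitChain_sum_eq i₀ m (d - b)
      (fun i => by
        have := h i; have := hb i
        simp only [Pi.sub_apply]
        split_ifs at this <;> omega)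
      (by have := hb i₀; simp only [Pi.sub_apply]; split_ifs at this <;> omega)
    have hsign' : ∀ v ∈ L, ∀ i,
        (0 ≤ d i → 0 ≤ v i) ∧ (d i ≤ 0 → v i ≤ 0) ∧ (d i = m + 1 → v i = 1) := by
      intro v hv i
      have h1 := hsign v hv i
      have h2 := hb i
      have h3 := h i
      simp only [Pi.sub_apply] at h1
      split_ifs at h2 <;> omega
    refine ⟨b :: L, ⟨List.forall_mem_cons.2 ⟨?_, hL.one⟩,
      List.forall_mem_cons.2 ⟨fun i => ?_, hL.bound⟩,
      List.pairwise_cons.2 ⟨fun v hv i => ?_, hL.step⟩⟩, by simp [hlen], by simp [hsum],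
      List.forall_mem_cons.2 ⟨fun i => ?_, ?_⟩⟩
    · have := hb i₀; split_ifs at this <;> omega
    · have := hb i; split_ifs at this <;> omega
    · have h1 := hsign' v hv i
      have h2 := hb i
      have h3 := hL.bound v hv i
      split_ifs at h2 <;> omega
    · have := hb i
      push_cast
      split_ifs at this <;> omega
    · push_cast
      exact hsign'

/-- Discrete midpoint convexity at distance two, for a two-element unit chain. -/
theorem LocallyDMC.pair_le {n : ℕ} {i₀ : Fin n} {f : (Fin n → ℤ) → WithTop ℝ} (h : LocallyDMC f)
    {a c : Fin n → ℤ} (hac : UnitChain i₀ [a, c]) (z : Fin n → ℤ) :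
    f (z + a) + f (z + c) ≤ f z + f (z + a + c) := by
  have hsum : [a, c].sum = a + c := by simp
  have h2 : linf (z - (z + [a, c].sum)) = 2 := by
    refine le_antisymm (Finset.sup_le fun i _ => ?_) (hac.two_le_linf (by simp) z)
    have ha := hac.bound a (by simp) i
    have hc := hac.bound c (by simp) i
    simp only [hsum, Pi.sub_apply, Pi.add_apply]
    omega
  have := h.2 _ _ h2
  rw [DMCPair, hac.avgUp_even (by simp), hac.avgDown_even (by simp)] at this
  simpa [oddPos, evenPos, add_comm, add_left_comm, add_assoc] using this

theorem LocallyDMC.dmcPair_of_unitChain {n : ℕ} {i₀ : Fin n} {f : (Fin n → ℤ) → WithTop ℝ}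
    (h : LocallyDMC f) {L : List (Fin n → ℤ)} (hL : UnitChain i₀ L) (he : Even L.length)
    (x : Fin n → ℤ) : DMCPair f x (x + L.sum) := by
  by_cases hx : f x = ⊤
  · simp [DMCPair, hx]
  by_cases hy : f (x + L.sum) = ⊤
  · simp [DMCPair, hy]
  have hperm := oddPos_append_evenPos_perm L
  have key := list_supermodular f (evenPos L) (oddPos L) x
    (fun a ha c hc z => by
      obtain ⟨l, hl, hsub⟩ : [a, c].Subperm L :=
        ((List.singleton_sublist.2 ha).append (List.singleton_sublist.2 hc)).subperm.trans
          hperm.subperm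
      have hlc := hL.sublist hsub
      rcases List.perm_pair.1 hl with rfl | rfl
      · exact h.pair_le hlc z
      · rw [add_comm (f (z + a)), add_right_comm]
        exact h.pair_le hlc z)
    (fun p q hp hq => by
      obtain ⟨l, hl, hsub⟩ : (p ++ q).Subperm L := (hp.append hq).subperm.trans hperm.subperm
      have := h.1.add_sum_mem L hL x hx hy l hsub
      rwa [hl.sum_eq, List.sum_append, ← add_assoc] at this)
  rw [DMCPair, hL.avgUp_even he, hL.avgDown_even he, add_comm (f _)]
  rwa [add_assoc x, oddPos_sum_add_evenPos_sum] at key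

theorem LocallyDMC.dmcPair_of_sub_apply_eq {n : ℕ} {f : (Fin n → ℤ) → WithTop ℝ}
    (h : LocallyDMC f) {x y : Fin n → ℤ} (hxy : Even (linf (x - y))) (i₀ : Fin n)
    (hi : y i₀ - x i₀ = linf (x - y)) : DMCPair f x y := by
  obtain ⟨L, hL, hlen, hsum, -⟩ := exists_unitChain_sum_eq i₀ (linf (x - y)) (y - x)
    (fun i => by rw [linf_sub_comm]; exact natAbs_le_linf _ i) hi
  have := h.dmcPair_of_unitChain hL (hlen ▸ hxy) x
  rwa [hsum, add_sub_cancel] at this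

/-- For a locally discrete midpoint convex function, discrete midpoint
convexity holds for all pairs whose ℓ∞-distance is even. -/
theorem locallyDMC_dmc_of_even {n : ℕ} (f : (Fin n → ℤ) → WithTop ℝ)
    (h : LocallyDMC f) (x y : Fin n → ℤ) (hxy : Even (linf (x - y))) :
    DMCPair f x y := by
  rcases isEmpty_or_nonempty (Fin n) with hn | hn
  · rw [DMCPair, Subsingleton.elim (avgUp x y) x, Subsingleton.elim (avgDown x y) y]
  obtain ⟨i₀, -, hi⟩ := Finset.exists_mem_eq_sup Finset.univ Finset.univ_nonempty
    fun i => ((x - y) i).natAbs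
  replace hi : linf (x - y) = ((x - y) i₀).natAbs := hi
  rw [Pi.sub_apply] at hi
  rcases le_total (x i₀) (y i₀) with hle | hle
  · exact h.dmcPair_of_sub_apply_eq hxy i₀ (by omega)
  · rw [linf_sub_comm] at hxy hi
    have := h.dmcPair_of_sub_apply_eq hxy i₀ (by omega)
    rwa [DMCPair, avgUp_comm, avgDown_comm, add_comm (f y)] at this
end
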